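/- arXiv:math/9810131 — 3 statements merged into one kernel-verified Lean document; each statement's English description precedes it below -/
import Mathlib

section
/- Let ψ : D → D be analytic with sup_{z ∈ D} |ψ(z)| < 1. Then the composition operator C_ψ : H^∞(D) → H^∞(D), defined by C_ψ(f)(z) = f(ψ(z)), is a well-defined compact bounded linear operator on H^∞(D). -/
set_option synthInstance.maxHeartbeats 1000000

/-- `H^∞(D)`: bounded analytic functions on the open unit disc, realized as the
subalgebra of those bounded continuous functions on the disc which agree with a
function analytic on the disc.  The norm is the sup norm `‖f‖ = sup_{z ∈ D} |f z|`. -/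
noncomputable def Hinf : Subalgebra ℂ (BoundedContinuousFunction (Metric.ball (0 : ℂ) 1) ℂ) where
  carrier := {f | ∃ g : ℂ → ℂ, DifferentiableOn ℂ g (Metric.ball 0 1) ∧
    ∀ z : Metric.ball (0 : ℂ) 1, f z = g z}
  mul_mem' := by
    rintro f₁ f₂ ⟨g₁, hg₁, he₁⟩ ⟨g₂, hg₂, he₂⟩
    exact ⟨g₁ * g₂, hg₁.mul hg₂, fun z => by simp [he₁ z, he₂ z]⟩
  add_mem' := by
    rintro f₁ f₂ ⟨g₁, hg₁, he₁⟩ ⟨g₂, hg₂, he₂⟩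
    exact ⟨g₁ + g₂, hg₁.add hg₂, fun z => by simp [he₁ z, he₂ z]⟩
  algebraMap_mem' := by
    intro c
    exact ⟨fun _ => c, differentiableOn_const c, fun z => by simp⟩

open Filter Topology in
theorem Hinf_isClosed :
    IsClosed (Hinf : Set (BoundedContinuousFunction (Metric.ball (0 : ℂ) 1) ℂ)) := by
  classical
  refine isClosed_of_closure_subset fun f hf => ?_
  obtain ⟨u, hu, hlim⟩ := mem_closure_iff_seq_limit.1 hf
  have hu' : ∀ n, ∃ g : ℂ → ℂ, DifferentiableOn ℂ g (Metric.ball 0 1) ∧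
    ∀ z : Metric.ball (0 : ℂ) 1, u n z = g z := fun n => hu n
  choose g hg hug using hu'
  let F : ℂ → ℂ := fun z => if h : z ∈ Metric.ball (0 : ℂ) 1 then f ⟨z, h⟩ else 0
  have hF : ∀ z : Metric.ball (0 : ℂ) 1, f z = F z := fun z => by
    simp only [F, dif_pos z.2]
  refine ⟨F, ?_, hF⟩
  have hunif : TendstoUniformlyOn g F atTop (Metric.ball 0 1) := by
    rw [Metric.tendstoUniformlyOn_iff]
    intro ε hε
    filter_upwards [Metric.tendsto_nhds.1 hlim ε hε] with n hn x hx
    have h1 := BoundedContinuousFunction.dist_coe_le_dist (f := u n) (g := f) ⟨x, hx⟩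
    rw [hF ⟨x, hx⟩, hug n ⟨x, hx⟩, dist_comm] at h1
    exact lt_of_le_of_lt h1 hn
  exact hunif.tendstoLocallyUniformlyOn.differentiableOn
    (Eventually.of_forall hg) Metric.isOpen_ball

theorem Hinf_lipschitz (r : ℝ) (hr1 : r < 1)
    (f : BoundedContinuousFunction (Metric.ball (0 : ℂ) 1) ℂ) (hf : f ∈ Hinf) (hn : ‖f‖ ≤ 1)
    (x y : Metric.ball (0 : ℂ) 1) (hx : ‖(x : ℂ)‖ ≤ r) (hy : ‖(y : ℂ)‖ ≤ r) :
    dist (f x) (f y) ≤ 1 / ((1 - r) / 2) * dist (x : ℂ) (y : ℂ) := by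
  obtain ⟨g, hg, hfg⟩ := hf
  have hρ : 0 < (1 - r) / 2 := by linarith
  have hsub : ∀ z ∈ Metric.closedBall (0 : ℂ) r,
      Metric.closedBall z ((1 - r) / 2) ⊆ Metric.ball (0 : ℂ) 1 := by
    intro z hz
    apply Metric.closedBall_subset_ball'
    rw [Metric.mem_closedBall] at hz
    linarith
  rw [hfg, hfg, dist_comm, dist_comm (x : ℂ), dist_eq_norm, dist_eq_norm]
  refine Convex.norm_image_sub_le_of_norm_deriv_le (𝕜 := ℂ) (s := Metric.closedBall (0 : ℂ) r)
    (fun z hz => ?_) (fun z hz => ?_) (convex_closedBall _ _) (by simpa using hx)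
    (by simpa using hy)
  · exact hg.differentiableAt (Metric.isOpen_ball.mem_nhds
      (hsub z hz (Metric.mem_closedBall_self hρ.le)))
  · refine Complex.norm_deriv_le_of_forall_mem_sphere_norm_le hρ ?_ ?_
    · apply DifferentiableOn.diffContOnCl
      exact hg.mono (Metric.closure_ball_subset_closedBall.trans (hsub z hz))
    · intro w hw
      have hw' := hsub z hz (Metric.sphere_subset_closedBall hw)
      rw [← hfg ⟨w, hw'⟩]
      exact (f.norm_coe_le_norm _).trans hn

theorem Hinf_norm_le (f : Hinf) (hf : f ∈ Metric.closedBall (0 : Hinf) 1) :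
    ‖(f : BoundedContinuousFunction (Metric.ball (0 : ℂ) 1) ℂ)‖ ≤ 1 :=
  (dist_zero_right (f : BoundedContinuousFunction (Metric.ball (0 : ℂ) 1) ℂ)).symm.le.trans hf

set_option maxHeartbeats 1000000 in
/-- If `ψ : D → D` is analytic with `sup_{z ∈ D} ‖ψ z‖ ≤ r < 1`, then the composition
operator `C_ψ f = f ∘ ψ` is a well-defined compact bounded linear operator on `H^∞(D)`. -/
theorem composition_operator_compact
    (ψ : ℂ → ℂ) (hψ : DifferentiableOn ℂ ψ (Metric.ball 0 1))
    (hmaps : Set.MapsTo ψ (Metric.ball (0 : ℂ) 1) (Metric.ball (0 : ℂ) 1))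
    (r : ℝ) (hr0 : 0 ≤ r) (hr1 : r < 1)
    (hbd : ∀ z ∈ Metric.ball (0 : ℂ) 1, ‖ψ z‖ ≤ r) :
    ∃ T : Hinf →L[ℂ] Hinf,
      (∀ (f : Hinf) (z : Metric.ball (0 : ℂ) 1),
        (T f : BoundedContinuousFunction (Metric.ball (0 : ℂ) 1) ℂ) z =
          (f : BoundedContinuousFunction (Metric.ball (0 : ℂ) 1) ℂ) ⟨ψ z, hmaps z.2⟩) ∧
      IsCompactOperator T := by
  classical
  have hKB : ∀ z : Metric.closedBall (0 : ℂ) r, (z : ℂ) ∈ Metric.ball (0 : ℂ) 1 := fun z =>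
    Metric.closedBall_subset_ball hr1 z.2
  let ι : C(Metric.closedBall (0 : ℂ) r, Metric.ball (0 : ℂ) 1) :=
    ⟨fun z => ⟨z, hKB z⟩, by fun_prop⟩
  have hψc : Continuous fun z : Metric.ball (0 : ℂ) 1 => ψ z :=
    continuousOn_iff_continuous_domRestrict.1 hψ.continuousOn
  have hψK : ∀ z : Metric.ball (0 : ℂ) 1, ψ z ∈ Metric.closedBall (0 : ℂ) r := fun z =>
    mem_closedBall_zero_iff.2 (hbd z z.2)
  let φ : C(Metric.ball (0 : ℂ) 1, Metric.closedBall (0 : ℂ) r) :=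
    ⟨fun z => ⟨ψ z, hψK z⟩, hψc.subtype_mk hψK⟩
  -- restriction to the closed ball is compact
  have hR : IsCompactOperator (fun f : Hinf =>
      (f : BoundedContinuousFunction (Metric.ball (0 : ℂ) 1) ℂ).compContinuous ι) := by
    rw [isCompactOperator_iff_exists_mem_nhds_image_subset_compact]
    refine ⟨Metric.closedBall 0 1, Metric.closedBall_mem_nhds _ one_pos, _,
      ?_, subset_closure⟩
    refine BoundedContinuousFunction.arzela_ascoli (Metric.closedBall (0 : ℂ) 1)
      (isCompact_closedBall _ _) _ ?_ ?_
    · rintro _ x ⟨f, hf, rfl⟩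
      have hf1 : ‖(f : BoundedContinuousFunction (Metric.ball (0 : ℂ) 1) ℂ)‖ ≤ 1 :=
          Hinf_norm_le f hf
      exact mem_closedBall_zero_iff.2 ((BoundedContinuousFunction.norm_coe_le_norm _ (ι x)).trans hf1)
    · refine Metric.equicontinuous_of_continuity_modulus
        (fun t => 1 / ((1 - r) / 2) * t) ?_ _ ?_
      · have : Continuous (fun t : ℝ => 1 / ((1 - r) / 2) * t) := by fun_prop
        simpa using this.tendsto 0
      · rintro x y ⟨_, f, hf, rfl⟩
        have hf1 : ‖(f : BoundedContinuousFunction (Metric.ball (0 : ℂ) 1) ℂ)‖ ≤ 1 :=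
          Hinf_norm_le f hf
        exact Hinf_lipschitz r hr1 f f.2 hf1 (ι x) (ι y) (mem_closedBall_zero_iff.1 x.2)
          (mem_closedBall_zero_iff.1 y.2)
  have hS := hR.continuous_comp (BoundedContinuousFunction.continuous_compContinuous φ)
  have hmem : ∀ f : Hinf,
      ((f : BoundedContinuousFunction (Metric.ball (0 : ℂ) 1) ℂ).compContinuous ι).compContinuous φ
        ∈ Subalgebra.toSubmodule Hinf := by
    rintro ⟨f, g, hg, hfg⟩
    exact ⟨g ∘ ψ, hg.comp hψ hmaps, fun z => hfg _⟩
  have hC := IsCompactOperator.codRestrict (V := Subalgebra.toSubmodule Hinf) hS hmem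
    Hinf_isClosed
  let L : Hinf →ₗ[ℂ] Hinf :=
    { toFun := fun f => ⟨_, hmem f⟩
      map_add' := fun f g => rfl
      map_smul' := fun c f => rfl }
  have hL : IsCompactOperator L := hC
  exact ⟨⟨L, hL.continuous⟩, fun f z => rfl, hL⟩
end

section
/- Let ψ : D → D be analytic with sup_{z ∈ D} |ψ(z)| < 1, let z₀ ∈ D be the unique fixed point of ψ, and let C_ψ : H^∞(D) → H^∞(D) be the composition operator C_ψ(f) = f ∘ ψ. Then the spectrum of C_ψ as a bounded linear operator on the Banach space H^∞(D) is exactly {(ψ'(z₀))^n : n ∈ ℕ, n ≥ 1} ∪ {0, 1}, where ψ' denotes the complex derivative of ψ. -/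
set_option synthInstance.maxHeartbeats 1000000

namespace SpecComp

open Metric Set Filter Topology ComplexConjugate

noncomputable def mob (c z : ℂ) : ℂ := (c - z) / (1 - conj c * z)

lemma key_id (c z : ℂ) : ‖1 - conj c * z‖ ^ 2 - ‖c - z‖ ^ 2 = (1 - ‖c‖ ^ 2) * (1 - ‖z‖ ^ 2) := by
  simp only [← Complex.normSq_eq_norm_sq, Complex.normSq_apply]
  simp
  ring

lemma denom_ne {c z : ℂ} (hc : ‖c‖ < 1) (hz : ‖z‖ < 1) : 1 - conj c * z ≠ 0 := by
  intro h
  have h1 : conj c * z = 1 := (sub_eq_zero.1 h).symm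
  have h2 : ‖conj c * z‖ = 1 := by rw [h1]; simp
  rw [norm_mul, RCLike.norm_conj] at h2
  nlinarith [norm_nonneg c, norm_nonneg z]

lemma denom_le {c z : ℂ} (hc : ‖c‖ < 1) (hz : ‖z‖ < 1) : ‖1 - conj c * z‖ ≤ 2 := by
  refine (norm_sub_le _ _).trans ?_
  rw [norm_mul, RCLike.norm_conj, norm_one]
  nlinarith [norm_nonneg c, norm_nonneg z]

lemma mob_le {c z : ℂ} {r : ℝ} (hc : ‖c‖ < 1) (hr1 : r < 1) (hz : ‖z‖ ≤ r) :
    ‖mob c z‖ ≤ Real.sqrt (1 - (1 - ‖c‖ ^ 2) * (1 - r ^ 2) / 4) := by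
  have hz1 : ‖z‖ < 1 := hz.trans_lt hr1
  have h0 := denom_ne hc hz1
  have h2 := denom_le hc hz1
  have hp : 0 < ‖1 - conj c * z‖ := norm_pos_iff.2 h0
  apply Real.le_sqrt_of_sq_le
  rw [mob, norm_div, div_pow, div_le_iff₀ (by positivity)]
  have hk := key_id c z
  have hcc : 0 < 1 - ‖c‖ ^ 2 := by nlinarith [norm_nonneg c]
  have hrr : 0 < 1 - r ^ 2 := by nlinarith [norm_nonneg z]
  have hzz : 1 - r ^ 2 ≤ 1 - ‖z‖ ^ 2 := by nlinarith [norm_nonneg z]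
  have hd : ‖1 - conj c * z‖ ^ 2 ≤ 4 := by nlinarith
  have e1 := mul_le_mul_of_nonneg_left hzz hcc.le
  have e2 := mul_le_mul_of_nonneg_left hd (mul_pos hcc hrr).le
  nlinarith

lemma mob_lt {c z : ℂ} (hc : ‖c‖ < 1) (hz : ‖z‖ < 1) : ‖mob c z‖ < 1 := by
  refine (mob_le hc hz le_rfl).trans_lt ?_
  rw [Real.sqrt_lt' one_pos]
  have hcc : 0 < 1 - ‖c‖ ^ 2 := by nlinarith [norm_nonneg c]
  have hrr : 0 < 1 - ‖z‖ ^ 2 := by nlinarith [norm_nonneg z]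
  nlinarith [mul_pos hcc hrr]

lemma mob_mob {c z : ℂ} (hc : ‖c‖ < 1) (hz : ‖z‖ < 1) : mob c (mob c z) = z := by
  have h0 := denom_ne hc hz
  have h1 := denom_ne hc (mob_lt hc hz)
  have h2 := denom_ne hc hc
  rw [mob, div_eq_iff h1]
  unfold mob
  apply mul_right_cancel₀ h0
  have e : ∀ x y : ℂ, x * (1 - conj c * ((c - z) / (1 - conj c * z))) * y
      = x * (y - conj c * ((c - z) / (1 - conj c * z) * y)) := fun x y => by ring
  rw [e, sub_mul, div_mul_cancel₀ _ h0]
  ring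

lemma mob_diff {c : ℂ} (hc : ‖c‖ < 1) : DifferentiableOn ℂ (mob c) (ball 0 1) := by
  unfold mob
  apply DifferentiableOn.div (by fun_prop) (by fun_prop)
  intro z hz
  exact denom_ne hc (by simpa using hz)

lemma iter_bound (ψ : ℂ → ℂ) (hψ : DifferentiableOn ℂ ψ (ball 0 1))
    (hmaps : MapsTo ψ (ball (0 : ℂ) 1) (ball (0 : ℂ) 1))
    (r : ℝ) (hr0 : 0 ≤ r) (hr1 : r < 1) (hbd : ∀ z ∈ ball (0 : ℂ) 1, ‖ψ z‖ ≤ r)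
    (z₀ : ℂ) (hz₀ : z₀ ∈ ball (0 : ℂ) 1) (hfix : ψ z₀ = z₀) :
    ∃ s : ℝ, 0 < s ∧ s < 1 ∧ ∀ k : ℕ, ∀ z ∈ ball (0 : ℂ) 1, ‖ψ^[k] z - z₀‖ ≤ 2 * s ^ k := by
  have hc : ‖z₀‖ < 1 := by simpa using hz₀
  have hcc : 0 < 1 - ‖z₀‖ ^ 2 := by nlinarith [norm_nonneg z₀]
  have hrr : 0 < 1 - r ^ 2 := by nlinarith
  have hpp := mul_pos hcc hrr
  set s := Real.sqrt (1 - (1 - ‖z₀‖ ^ 2) * (1 - r ^ 2) / 4) with hs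
  have hs0 : 0 < s := Real.sqrt_pos.2 (by nlinarith [norm_nonneg z₀])
  have hs1 : s < 1 := by
    rw [hs, Real.sqrt_lt' one_pos]; nlinarith
  have hm : MapsTo (mob z₀) (ball 0 1) (ball 0 1) := fun z hz => by
    simpa using mob_lt hc (by simpa using hz)
  have step : ∀ z ∈ ball (0 : ℂ) 1, ‖mob z₀ (ψ z)‖ ≤ s * ‖mob z₀ z‖ := by
    intro z hz
    have hF0 : (mob z₀ ∘ ψ ∘ mob z₀) 0 = 0 := by simp [mob, hfix]
    have := Complex.dist_le_div_mul_dist_of_mapsTo_ball (f := mob z₀ ∘ ψ ∘ mob z₀) (c := 0)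
      (R₁ := 1) (R₂ := s) (z := mob z₀ z)
      ((mob_diff hc).comp (hψ.comp (mob_diff hc) hm) (hmaps.comp hm))
      (fun w hw => by
        rw [hF0]
        simpa using mob_le hc hr1 (hbd _ (hm hw)))
      (hm hz)
    rw [hF0] at this
    simpa [mob_mob hc (show ‖z‖ < 1 by simpa using hz)] using this
  have it : ∀ k : ℕ, ∀ z ∈ ball (0 : ℂ) 1, ‖mob z₀ (ψ^[k] z)‖ ≤ s ^ k := by
    intro k
    induction k with
    | zero => intro z hz; simpa using (mob_lt hc (by simpa using hz)).le
    | succ k ih =>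
      intro z hz
      rw [Function.iterate_succ_apply']
      refine (step _ (hmaps.iterate k hz)).trans ?_
      rw [pow_succ']
      exact mul_le_mul_of_nonneg_left (ih z hz) hs0.le
  refine ⟨s, hs0, hs1, fun k z hz => ?_⟩
  have hw : ‖ψ^[k] z‖ < 1 := by simpa using hmaps.iterate k hz
  have h1 := it k z hz
  have h0 := denom_ne hc hw
  have : ψ^[k] z - z₀ = - (mob z₀ (ψ^[k] z) * (1 - conj z₀ * ψ^[k] z)) := by
    rw [mob, div_mul_cancel₀ _ h0]; ring
  rw [this, norm_neg, norm_mul, mul_comm]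
  exact mul_le_mul (denom_le hc hw) h1 (norm_nonneg _) (by norm_num)

lemma deriv_lt (ψ : ℂ → ℂ) (hψ : DifferentiableOn ℂ ψ (ball 0 1))
    (hmaps : MapsTo ψ (ball (0 : ℂ) 1) (ball (0 : ℂ) 1))
    (z₀ : ℂ) (hz₀ : z₀ ∈ ball (0 : ℂ) 1) (hfix : ψ z₀ = z₀) (s : ℝ) (hs1 : s < 1)
    (hit : ∀ k : ℕ, ∀ z ∈ ball (0 : ℂ) 1, ‖ψ^[k] z - z₀‖ ≤ 2 * s ^ k) :
    ‖deriv ψ z₀‖ < 1 := by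
  by_contra hcon
  push Not at hcon
  have hc : ‖z₀‖ < 1 := by simpa using hz₀
  set δ := 1 - ‖z₀‖ with hδ
  have hδ0 : 0 < δ := by linarith
  have hsub : ball z₀ δ ⊆ ball 0 1 := ball_subset_ball' (by simp [hδ])
  have hd : HasDerivAt ψ (deriv ψ z₀) z₀ :=
    (hψ.differentiableAt (isOpen_ball.mem_nhds hz₀)).hasDerivAt
  have hfk : ∀ k, ψ^[k] z₀ = z₀ := fun k => Function.iterate_fixed hfix k
  have hdi : ∀ k : ℕ, DifferentiableOn ℂ (ψ^[k]) (ball 0 1) := fun k => hψ.iterate hmaps k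
  have hb : ∀ k : ℕ, 1 ≤ 2 * s ^ k / δ := by
    intro k
    have := Complex.norm_deriv_le_div_of_mapsTo_ball (f := ψ^[k]) (c := z₀) (R₁ := δ)
      (R₂ := 2 * s ^ k) ((hdi k).mono hsub)
      (fun w hw => by rw [hfk, mem_closedBall, dist_eq_norm]; exact hit k w (hsub hw)) hδ0
    rw [(hd.iterate z₀ hfix k).deriv, norm_pow] at this
    exact (one_le_pow₀ hcon).trans this
  obtain ⟨k, hk⟩ := exists_pow_lt_of_lt_one (show 0 < δ / 2 by linarith) hs1
  have := hb k
  rw [le_div_iff₀ hδ0] at this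
  linarith

/-- comparing leading terms -/
lemma lead {z₀ : ℂ} {m n : ℕ} {G K : ℂ → ℂ} (hG : ContinuousAt G z₀) (hK : ContinuousAt K z₀)
    (h : ∀ᶠ z in 𝓝 z₀, (z - z₀) ^ m * G z = (z - z₀) ^ n * K z) (hmn : m ≤ n) :
    G z₀ = (0 : ℂ) ^ (n - m) * K z₀ := by
  have h2 : ∀ᶠ z in 𝓝[≠] z₀, G z = (z - z₀) ^ (n - m) * K z := by
    filter_upwards [h.filter_mono nhdsWithin_le_nhds, self_mem_nhdsWithin] with z hz hne
    have hne' : (z - z₀) ^ m ≠ 0 := pow_ne_zero _ (sub_ne_zero.2 hne)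
    apply mul_left_cancel₀ hne'
    rw [hz, ← mul_assoc, ← pow_add, Nat.add_sub_cancel' hmn]
  have t1 : Tendsto G (𝓝[≠] z₀) (𝓝 (G z₀)) := hG.tendsto.mono_left nhdsWithin_le_nhds
  have hc : ContinuousAt (fun z => (z - z₀) ^ (n - m) * K z) z₀ := by fun_prop
  have t2 := hc.tendsto.mono_left (nhdsWithin_le_nhds (s := {z₀}ᶜ))
  have := tendsto_nhds_unique (t1.congr' h2) t2
  simpa using this

/-- leading term of `f ∘ ψ - lam f`. -/
lemma lead_comp (ψ : ℂ → ℂ) (hψ : DifferentiableOn ℂ ψ (ball 0 1))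
    (z₀ : ℂ) (hz₀ : z₀ ∈ ball (0 : ℂ) 1) (hfix : ψ z₀ = z₀)
    (f : ℂ → ℂ) (hf : DifferentiableOn ℂ f (ball 0 1)) (hne : ¬ ∀ᶠ z in 𝓝 z₀, f z = 0)
    (lam : ℂ) : ∃ (m : ℕ) (G : ℂ → ℂ) (b : ℂ), b ≠ 0 ∧ ContinuousAt G z₀ ∧
      G z₀ = b * ((deriv ψ z₀) ^ m - lam) ∧
      ∀ᶠ z in 𝓝 z₀, f (ψ z) - lam * f z = (z - z₀) ^ m * G z := by
  have hnh : ball (0 : ℂ) 1 ∈ 𝓝 z₀ := isOpen_ball.mem_nhds hz₀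
  obtain ⟨m, g, hg, hg0, hfg⟩ :=
    ((hf.analyticAt hnh).exists_eventuallyEq_pow_smul_nonzero_iff).2 hne
  have hψc : ContinuousAt ψ z₀ := (hψ.differentiableAt hnh).continuousAt
  have hq : ContinuousAt (dslope ψ z₀) z₀ :=
    (((Complex.differentiableOn_dslope hnh).2 hψ).differentiableAt hnh).continuousAt
  have hgc : ContinuousAt (fun z => g (ψ z)) z₀ :=
    ContinuousAt.comp (by rw [hfix]; exact hg.continuousAt) hψc
  have hgc' := hg.continuousAt
  refine ⟨m, fun z => (dslope ψ z₀ z) ^ m * g (ψ z) - lam * g z, g z₀, hg0,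
    ((hq.pow m).mul hgc).sub (continuousAt_const.mul hgc'), by simp [dslope_same, hfix]; ring, ?_⟩
  have ht : Tendsto ψ (𝓝 z₀) (𝓝 z₀) := by simpa [ContinuousAt, hfix] using hψc
  filter_upwards [hfg, ht.eventually hfg] with z h1 h2
  have h3 := sub_smul_dslope ψ z₀ z
  rw [hfix, smul_eq_mul] at h3
  rw [h1, h2, ← h3]
  simp only [smul_eq_mul, mul_pow]
  ring

/-- solving modulo high order -/
lemma solve_mod (ψ : ℂ → ℂ) (hψ : DifferentiableOn ℂ ψ (ball 0 1))
    (z₀ : ℂ) (hz₀ : z₀ ∈ ball (0 : ℂ) 1) (hfix : ψ z₀ = z₀)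
    (lam : ℂ) (hlam : ∀ n : ℕ, (deriv ψ z₀) ^ n ≠ lam)
    (g : ℂ → ℂ) (hg : DifferentiableOn ℂ g (ball 0 1)) (N : ℕ) :
    ∃ p K : ℂ → ℂ, DifferentiableOn ℂ p (ball 0 1) ∧ (∃ C, ∀ z ∈ ball (0 : ℂ) 1, ‖p z‖ ≤ C) ∧
      DifferentiableOn ℂ K (ball 0 1) ∧
      ∀ z ∈ ball (0 : ℂ) 1, g z - (p (ψ z) - lam * p z) = (z - z₀) ^ N * K z := by
  have hnh : ball (0 : ℂ) 1 ∈ 𝓝 z₀ := isOpen_ball.mem_nhds hz₀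
  have hc : ‖z₀‖ < 1 := by simpa using hz₀
  induction N with
  | zero => exact ⟨0, g, differentiableOn_const 0, ⟨0, by simp⟩, hg, by simp⟩
  | succ N ih =>
    obtain ⟨p, K, hp, ⟨C, hC⟩, hK, h⟩ := ih
    set c := K z₀ / ((deriv ψ z₀) ^ N - lam) with hcdef
    have hq : DifferentiableOn ℂ (dslope ψ z₀) (ball 0 1) :=
      (Complex.differentiableOn_dslope hnh).2 hψ
    set L : ℂ → ℂ := fun z => K z - c * ((dslope ψ z₀ z) ^ N - lam) with hL
    have hLd : DifferentiableOn ℂ L (ball 0 1) := by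
      apply hK.sub
      exact ((hq.pow N).sub_const lam).const_mul c
    have hL0 : L z₀ = 0 := by
      have := sub_ne_zero.2 (hlam N)
      simp only [hL, dslope_same, hcdef]
      rw [div_mul_cancel₀ _ this, sub_self]
    refine ⟨fun z => p z + c * (z - z₀) ^ N, dslope L z₀, by fun_prop,
      ⟨C + ‖c‖ * 2 ^ N, ?_⟩, (Complex.differentiableOn_dslope hnh).2 hLd, ?_⟩
    · intro z hz
      refine (norm_add_le _ _).trans (add_le_add (hC z hz) ?_)
      rw [norm_mul, norm_pow]
      have hz' : ‖z‖ < 1 := by simpa using hz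
      have : ‖z - z₀‖ ≤ 2 := (norm_sub_le _ _).trans (by linarith)
      gcongr
    · intro z hz
      have h3 := sub_smul_dslope ψ z₀ z
      have h4 := sub_smul_dslope L z₀ z
      rw [hfix, smul_eq_mul] at h3
      rw [hL0, sub_zero, smul_eq_mul] at h4
      have h5 := h z hz
      have : g z - (p (ψ z) + c * (ψ z - z₀) ^ N - lam * (p z + c * (z - z₀) ^ N))
          = (g z - (p (ψ z) - lam * p z)) - c * ((ψ z - z₀) ^ N - lam * (z - z₀) ^ N) := by ring
      rw [this, h5, pow_succ, mul_assoc, h4, ← h3, mul_pow]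
      simp only [hL]
      ring

/-- solving for functions vanishing to high order -/
lemma solve_high (ψ : ℂ → ℂ) (hψ : DifferentiableOn ℂ ψ (ball 0 1))
    (hmaps : MapsTo ψ (ball (0 : ℂ) 1) (ball (0 : ℂ) 1))
    (r : ℝ) (hr1 : r < 1) (hbd : ∀ z ∈ ball (0 : ℂ) 1, ‖ψ z‖ ≤ r)
    (z₀ : ℂ) (s : ℝ) (hs0 : 0 < s)
    (hit : ∀ k : ℕ, ∀ z ∈ ball (0 : ℂ) 1, ‖ψ^[k] z - z₀‖ ≤ 2 * s ^ k)
    (lam : ℂ) (hlam : lam ≠ 0) (N : ℕ) (hN : s ^ N < ‖lam‖)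
    (h K : ℂ → ℂ) (hh : DifferentiableOn ℂ h (ball 0 1)) (C : ℝ)
    (hC : ∀ z ∈ ball (0 : ℂ) 1, ‖h z‖ ≤ C) (hK : DifferentiableOn ℂ K (ball 0 1))
    (hhK : ∀ z ∈ ball (0 : ℂ) 1, h z = (z - z₀) ^ N * K z) :
    ∃ f : ℂ → ℂ, DifferentiableOn ℂ f (ball 0 1) ∧ (∃ C, ∀ z ∈ ball (0 : ℂ) 1, ‖f z‖ ≤ C) ∧
      ∀ z ∈ ball (0 : ℂ) 1, f (ψ z) - lam * f z = h z := by
  have hcl : closedBall (0 : ℂ) r ⊆ ball 0 1 := closedBall_subset_ball hr1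
  obtain ⟨M, hM⟩ := (isCompact_closedBall (0 : ℂ) r).exists_bound_of_continuousOn
    (hK.continuousOn.mono hcl)
  have hlp : 0 < ‖lam‖ := norm_pos_iff.2 hlam
  have hC0 : 0 ≤ C := (norm_nonneg _).trans (hC 0 (by simp))
  have hM0 : 0 ≤ M := (norm_nonneg _).trans (hM (ψ 0) (by simpa using hbd 0 (by simp)))
  set B := C + M * 2 ^ N with hB
  have hB0 : 0 ≤ B := by positivity
  have hterm : ∀ k : ℕ, ∀ z ∈ ball (0 : ℂ) 1, ‖h (ψ^[k] z)‖ ≤ B * (s ^ N) ^ k := by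
    intro k z hz
    cases k with
    | zero =>
      simp only [Function.iterate_zero, id_eq, pow_zero, mul_one]
      exact (hC z hz).trans (by rw [hB]; linarith [show 0 ≤ M * 2 ^ N by positivity])
    | succ k =>
      have hm := hmaps.iterate (k + 1) hz
      have hm2 : ψ^[k + 1] z ∈ closedBall (0 : ℂ) r := by
        rw [Function.iterate_succ_apply']
        simpa using hbd _ (hmaps.iterate k hz)
      rw [hhK _ hm, norm_mul, norm_pow]
      calc ‖ψ^[k + 1] z - z₀‖ ^ N * ‖K (ψ^[k + 1] z)‖
          ≤ (2 * s ^ (k + 1)) ^ N * M := by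
            gcongr
            · exact hit _ z hz
            · exact hM _ hm2
        _ = (M * 2 ^ N) * (s ^ N) ^ (k + 1) := by
            rw [mul_pow, ← pow_mul, ← pow_mul, mul_comm N]; ring
        _ ≤ B * (s ^ N) ^ (k + 1) := by
            gcongr
            rw [hB]; linarith
  set F : ℕ → ℂ → ℂ := fun k z => (lam⁻¹) ^ (k + 1) * h (ψ^[k] z) with hF
  set u : ℕ → ℝ := fun k => (‖lam‖⁻¹ * B) * (s ^ N / ‖lam‖) ^ k with hu
  have hsum : Summable u := by
    apply Summable.mul_left
    exact summable_geometric_of_lt_one (by positivity) ((div_lt_one hlp).2 hN)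
  have hFu : ∀ k : ℕ, ∀ z ∈ ball (0 : ℂ) 1, ‖F k z‖ ≤ u k := by
    intro k z hz
    simp only [hF, hu, norm_mul, norm_pow, norm_inv]
    calc (‖lam‖⁻¹) ^ (k + 1) * ‖h (ψ^[k] z)‖ ≤ (‖lam‖⁻¹) ^ (k + 1) * (B * (s ^ N) ^ k) := by
          gcongr
          exact hterm k z hz
      _ = _ := by rw [div_pow, pow_succ, div_eq_mul_inv, inv_pow]; ring
  have hFd : ∀ k, DifferentiableOn ℂ (F k) (ball 0 1) := fun k =>
    (hh.comp (hψ.iterate hmaps k) (hmaps.iterate k)).const_mul _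
  have hFs : ∀ z ∈ ball (0 : ℂ) 1, Summable (fun k => F k z) := fun z hz =>
    Summable.of_norm_bounded hsum (fun k => hFu k z hz)
  refine ⟨fun z => - ∑' k, F k z,
    (Complex.differentiableOn_tsum_of_summable_norm hsum hFd isOpen_ball hFu).neg, ⟨∑' k, u k, ?_⟩, ?_⟩
  · intro z hz
    rw [norm_neg]
    exact tsum_of_norm_bounded hsum.hasSum (fun k => hFu k z hz)
  · intro z hz
    have h1 : ∀ k, F k (ψ z) = lam * F (k + 1) z := by
      intro k
      simp only [hF, Function.iterate_succ_apply]
      rw [pow_succ _ (k + 1)]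
      field_simp
    beta_reduce
    rw [(hFs z hz).tsum_eq_zero_add, tsum_congr h1, tsum_mul_left]
    simp only [hF]
    simp
    field_simp
    ring


lemma mkH (f : ℂ → ℂ) (hf : DifferentiableOn ℂ f (ball 0 1))
    (hb : ∃ C, ∀ z ∈ ball (0 : ℂ) 1, ‖f z‖ ≤ C) :
    ∃ F : Hinf, ∀ z : ball (0 : ℂ) 1,
      (F : BoundedContinuousFunction (ball (0 : ℂ) 1) ℂ) z = f z := by
  obtain ⟨C, hC⟩ := hb
  exact ⟨⟨BoundedContinuousFunction.ofNormedAddCommGroup (fun z : ball (0 : ℂ) 1 => f z)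
    (continuousOn_iff_continuous_domRestrict.1 hf.continuousOn) C (fun z => hC z z.2),
    f, hf, fun z => rfl⟩, fun z => rfl⟩

lemma extH {F G : Hinf} (h : ∀ z : ball (0 : ℂ) 1,
    (F : BoundedContinuousFunction (ball (0 : ℂ) 1) ℂ) z =
    (G : BoundedContinuousFunction (ball (0 : ℂ) 1) ℂ) z) : F = G :=
  Subtype.ext (BoundedContinuousFunction.ext h)

lemma outH (F : Hinf) : ∃ f : ℂ → ℂ, DifferentiableOn ℂ f (ball 0 1) ∧
    (∀ z : ball (0 : ℂ) 1, (F : BoundedContinuousFunction (ball (0 : ℂ) 1) ℂ) z = f z) ∧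
    ∀ z ∈ ball (0 : ℂ) 1, ‖f z‖ ≤ ‖F‖ := by
  obtain ⟨f, hf, h⟩ := F.2
  refine ⟨f, hf, h, fun z hz => ?_⟩
  rw [← h ⟨z, hz⟩]
  exact BoundedContinuousFunction.norm_coe_le_norm _ _

lemma closedH : IsClosed (Hinf : Set (BoundedContinuousFunction (ball (0 : ℂ) 1) ℂ)) := by
  rw [← isSeqClosed_iff_isClosed]
  intro F f hF hlim
  choose g hg hgF using hF
  classical
  let e : ℂ → ℂ := fun z => if hz : z ∈ ball (0 : ℂ) 1 then f ⟨z, hz⟩ else 0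
  refine ⟨e, ?_, fun z => by simp only [e]; rw [dif_pos z.2]⟩
  have hu : TendstoUniformlyOn g e atTop (ball 0 1) := by
    rw [Metric.tendstoUniformlyOn_iff]
    have := BoundedContinuousFunction.tendsto_iff_tendstoUniformly.1 hlim
    rw [Metric.tendstoUniformly_iff] at this
    intro ε hε
    filter_upwards [this ε hε] with n hn z hz
    have h1 := hn ⟨z, hz⟩
    rw [hgF n ⟨z, hz⟩] at h1
    simpa only [e, dif_pos hz] using h1
  exact hu.tendstoLocallyUniformlyOn.differentiableOn (Eventually.of_forall hg) isOpen_ball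

lemma completeH : CompleteSpace Hinf := closedH.completeSpace_coe

end SpecComp

/-- If `ψ : D → D` is analytic with `sup_{z ∈ D} ‖ψ z‖ ≤ r < 1`, with (unique) fixed
point `z₀ ∈ D`, and `C_ψ : H^∞(D) → H^∞(D)` is the composition operator `f ↦ f ∘ ψ`,
then the spectrum of `C_ψ` is `{(ψ'(z₀))^n : n ≥ 1} ∪ {0, 1}`. -/
theorem spectrum_composition_operator
    (ψ : ℂ → ℂ) (hψ : DifferentiableOn ℂ ψ (Metric.ball 0 1))
    (hmaps : Set.MapsTo ψ (Metric.ball (0 : ℂ) 1) (Metric.ball (0 : ℂ) 1))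
    (r : ℝ) (hr0 : 0 ≤ r) (hr1 : r < 1)
    (hbd : ∀ z ∈ Metric.ball (0 : ℂ) 1, ‖ψ z‖ ≤ r)
    (z₀ : ℂ) (hz₀ : z₀ ∈ Metric.ball (0 : ℂ) 1) (hfix : ψ z₀ = z₀)
    (T : Hinf →L[ℂ] Hinf)
    (hT : ∀ (f : Hinf) (z : Metric.ball (0 : ℂ) 1),
      (T f : BoundedContinuousFunction (Metric.ball (0 : ℂ) 1) ℂ) z =
        (f : BoundedContinuousFunction (Metric.ball (0 : ℂ) 1) ℂ) ⟨ψ z, hmaps z.2⟩) :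
    spectrum ℂ T =
      {lam : ℂ | ∃ n : ℕ, 1 ≤ n ∧ lam = (deriv ψ z₀) ^ n} ∪ {0, 1} := by
  classical
  have : CompleteSpace Hinf := SpecComp.completeH
  obtain ⟨s, hs0, hs1, hit⟩ := SpecComp.iter_bound ψ hψ hmaps r hr0 hr1 hbd z₀ hz₀ hfix
  have ha := SpecComp.deriv_lt ψ hψ hmaps z₀ hz₀ hfix s hs1 hit
  have hnh : Metric.ball (0 : ℂ) 1 ∈ nhds z₀ := Metric.isOpen_ball.mem_nhds hz₀
  have hc : ‖z₀‖ < 1 := by simpa using hz₀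
  have hbij : ∀ lam : ℂ, lam ∉ spectrum ℂ T ↔
      Function.Bijective (algebraMap ℂ (Hinf →L[ℂ] Hinf) lam - T) := by
    intro lam
    rw [spectrum.notMem_iff, ContinuousLinearMap.isUnit_iff_bijective]
  have happ : ∀ (lam : ℂ) (f : Hinf) (z : Metric.ball (0 : ℂ) 1),
      (((algebraMap ℂ (Hinf →L[ℂ] Hinf) lam - T) f : Hinf) :
        BoundedContinuousFunction (Metric.ball (0 : ℂ) 1) ℂ) z =
      lam * (f : BoundedContinuousFunction (Metric.ball (0 : ℂ) 1) ℂ) z -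
        (f : BoundedContinuousFunction (Metric.ball (0 : ℂ) 1) ℂ) ⟨ψ z, hmaps z.2⟩ := by
    intro lam f z
    rw [← hT f z, Algebra.algebraMap_eq_smul_one]
    rfl
  have h0 : (0 : ℂ) ∈ spectrum ℂ T := by
    by_contra hcon
    obtain ⟨S, hS⟩ := (spectrum.notMem_iff.1 hcon).exists_left_inv
    have hSf : ∀ f, ‖f‖ ≤ ‖S‖ * ‖T f‖ := fun f => by
      have h1 : S ((algebraMap ℂ (Hinf →L[ℂ] Hinf) 0 - T) f) = f :=
        congrArg (fun A : Hinf →L[ℂ] Hinf => A f) hS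
      have h2 : (algebraMap ℂ (Hinf →L[ℂ] Hinf) 0 - T) f = -(T f) := by
        apply SpecComp.extH
        intro z
        rw [happ, zero_mul, zero_sub, ← hT f z]
        rfl
      rw [h2] at h1
      calc ‖f‖ = ‖S (-(T f))‖ := by rw [h1]
        _ ≤ ‖S‖ * ‖-(T f)‖ := S.le_opNorm _
        _ = ‖S‖ * ‖T f‖ := by rw [norm_neg]
    have hk : ∀ k : ℕ, 1 ≤ ‖S‖ * r ^ k := by
      intro k
      obtain ⟨F, hF⟩ := SpecComp.mkH (fun z => z ^ k) (by fun_prop)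
        ⟨1, fun z hz => by
          rw [norm_pow]
          exact pow_le_one₀ (norm_nonneg _) (by simpa using (le_of_lt (mem_ball_zero_iff.1 hz)))⟩
      have hTF : ‖T F‖ ≤ r ^ k := by
        refine (BoundedContinuousFunction.norm_le (by positivity)).2 fun z => ?_
        change ‖(T F : BoundedContinuousFunction (Metric.ball (0 : ℂ) 1) ℂ) z‖ ≤ r ^ k
        rw [hT, hF, norm_pow]
        exact pow_le_pow_left₀ (norm_nonneg _) (hbd z z.2) k
      have hle : ‖F‖ ≤ ‖S‖ * r ^ k :=
        (hSf F).trans (mul_le_mul_of_nonneg_left hTF S.opNorm_nonneg)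
      refine le_trans ?_ hle
      have hx : ∀ x : ℝ, x ∈ Set.Ioo (0 : ℝ) 1 → x ^ k ≤ ‖F‖ := by
        intro x hx
        have hxb : (x : ℂ) ∈ Metric.ball (0 : ℂ) 1 := by
          rw [mem_ball_zero_iff, Complex.norm_real, Real.norm_eq_abs, abs_of_pos hx.1]
          exact hx.2
        have h1 : ‖(F : BoundedContinuousFunction (Metric.ball (0 : ℂ) 1) ℂ) ⟨x, hxb⟩‖ ≤ ‖F‖ :=
          BoundedContinuousFunction.norm_coe_le_norm _ _
        rw [hF, norm_pow, Complex.norm_real, Real.norm_eq_abs, abs_of_pos hx.1] at h1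
        exact h1
      have ht : Filter.Tendsto (fun x : ℝ => x ^ k) (nhdsWithin 1 (Set.Iio 1)) (nhds 1) := by
        have : Continuous (fun x : ℝ => x ^ k) := by fun_prop
        simpa using (this.tendsto 1).mono_left nhdsWithin_le_nhds
      refine le_of_tendsto ht ?_
      filter_upwards [Ioo_mem_nhdsLT (show (0 : ℝ) < 1 by norm_num)] with x hxx
      exact hx x hxx
    have hSp : 0 < ‖S‖ := by
      have := hk 0
      simp at this
      linarith
    obtain ⟨k, hkk⟩ := exists_pow_lt_of_lt_one (inv_pos.2 hSp) hr1
    have h1 := hk k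
    have h2 := mul_lt_mul_of_pos_left hkk hSp
    rw [mul_inv_cancel₀ hSp.ne'] at h2
    linarith
  -- powers of the derivative
  have hpow : ∀ n : ℕ, (deriv ψ z₀) ^ n ≠ 0 → (deriv ψ z₀) ^ n ∈ spectrum ℂ T := by
    intro n hn0
    by_contra hcon
    obtain ⟨Q, hQ⟩ := SpecComp.mkH (fun z => (z - z₀) ^ n) (by fun_prop)
      ⟨2 ^ n, fun z hz => by
        have hz' : ‖z‖ < 1 := by simpa using hz
        rw [norm_pow]
        exact pow_le_pow_left₀ (norm_nonneg _)
          ((norm_sub_le _ _).trans (by linarith)) n⟩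
    obtain ⟨F, hF⟩ := ((hbij _).1 hcon).2 Q
    obtain ⟨f, hfd, hfF, -⟩ := SpecComp.outH F
    have heq : ∀ z ∈ Metric.ball (0 : ℂ) 1,
        f (ψ z) - (deriv ψ z₀) ^ n * f z = (z - z₀) ^ n * (-1) := by
      intro z hz
      have h1 := happ ((deriv ψ z₀) ^ n) F ⟨z, hz⟩
      rw [hF, hQ, hfF, hfF] at h1
      simp only at h1
      rw [h1]; ring
    have hev : ∀ᶠ z in nhds z₀, f (ψ z) - (deriv ψ z₀) ^ n * f z = (z - z₀) ^ n * (-1) := by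
      filter_upwards [hnh] with z hz using heq z hz
    by_cases hne : ∀ᶠ z in nhds z₀, f z = 0
    · have hψc : Filter.Tendsto ψ (nhds z₀) (nhds z₀) := by
        have := (hψ.differentiableAt hnh).continuousAt.tendsto
        rwa [hfix] at this
      have hz : ∀ᶠ z in nhds z₀, (z - z₀) ^ n * (-1) = (z - z₀) ^ (n + 1) * 0 := by
        filter_upwards [hev, hne, hψc.eventually hne] with z h1 h2 h3
        rw [← h1, h2, h3]; simp
      have := SpecComp.lead (G := fun _ => -1) (K := fun _ => 0) continuousAt_const
        continuousAt_const hz (Nat.le_succ n)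
      simp at this
    · obtain ⟨m, G, b, hb, hG, hGz, hGe⟩ :=
        SpecComp.lead_comp ψ hψ z₀ hz₀ hfix f hfd hne ((deriv ψ z₀) ^ n)
      have hcmp : ∀ᶠ z in nhds z₀, (z - z₀) ^ m * G z = (z - z₀) ^ n * (-1) := by
        filter_upwards [hev, hGe] with z h1 h2
        rw [← h1, ← h2]
      rcases lt_trichotomy m n with hmn | hmn | hmn
      · have := SpecComp.lead (K := fun _ => -1) hG continuousAt_const hcmp hmn.le
        rw [hGz, zero_pow (Nat.sub_ne_zero_of_lt hmn), zero_mul] at this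
        have h2 := (mul_eq_zero.1 this).resolve_left hb
        have h3 : ‖deriv ψ z₀‖ ^ m = ‖deriv ψ z₀‖ ^ n := by
          rw [← norm_pow, ← norm_pow, sub_eq_zero.1 h2]
        have hn' : n ≠ 0 := by omega
        have hpos : 0 < ‖deriv ψ z₀‖ := norm_pos_iff.2 (fun h => hn0 (by rw [h, zero_pow hn']))
        have := pow_lt_pow_right_of_lt_one₀ hpos ha hmn
        linarith
      · subst hmn
        have := SpecComp.lead (K := fun _ => -1) hG continuousAt_const hcmp le_rfl
        rw [hGz] at this
        simp at this
      · have := SpecComp.lead (G := fun _ => -1) (K := G) continuousAt_const hG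
          (hcmp.mono fun z hz => hz.symm) hmn.le
        rw [zero_pow (Nat.sub_ne_zero_of_lt hmn), zero_mul] at this
        simp at this
  -- everything else is in the resolvent set
  have hres : ∀ lam : ℂ, lam ≠ 0 → (∀ n : ℕ, (deriv ψ z₀) ^ n ≠ lam) → lam ∉ spectrum ℂ T := by
    intro lam hl0 hl
    rw [hbij]
    constructor
    · rw [injective_iff_map_eq_zero]
      intro F hF
      obtain ⟨f, hfd, hfF, -⟩ := SpecComp.outH F
      have heq : ∀ z ∈ Metric.ball (0 : ℂ) 1, f (ψ z) - lam * f z = 0 := by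
        intro z hz
        have h1 := happ lam F ⟨z, hz⟩
        rw [hF, hfF, hfF] at h1
        have h2 : (0 : ℂ) = lam * f z - f (ψ z) := h1
        linear_combination h2
      have hne : ∀ᶠ z in nhds z₀, f z = 0 := by
        by_contra hne
        obtain ⟨m, G, b, hb, hG, hGz, hGe⟩ :=
          SpecComp.lead_comp ψ hψ z₀ hz₀ hfix f hfd hne lam
        have hcmp : ∀ᶠ z in nhds z₀, (z - z₀) ^ m * G z = (z - z₀) ^ m * 0 := by
          filter_upwards [hnh, hGe] with z h1 h2
          rw [← h2, heq z h1, mul_zero]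
        have := SpecComp.lead (K := fun _ => 0) hG continuousAt_const hcmp le_rfl
        rw [hGz, mul_zero] at this
        exact sub_ne_zero.2 (hl m) ((mul_eq_zero.1 this).resolve_left hb)
      have hz := (hfd.analyticOnNhd Metric.isOpen_ball).eqOn_zero_of_preconnected_of_eventuallyEq_zero
        (convex_ball (0 : ℂ) 1).isPreconnected hz₀ hne
      apply SpecComp.extH
      intro z
      rw [hfF]
      exact hz z.2
    · intro Q
      obtain ⟨g, hgd, hgQ, hgb⟩ := SpecComp.outH Q
      obtain ⟨N, hN⟩ := exists_pow_lt_of_lt_one (norm_pos_iff.2 hl0) hs1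
      obtain ⟨p, K, hp, ⟨C, hC⟩, hK, hpK⟩ :=
        SpecComp.solve_mod ψ hψ z₀ hz₀ hfix lam hl g hgd N
      obtain ⟨f, hf, ⟨C', hC'⟩, hfe⟩ := SpecComp.solve_high ψ hψ hmaps r hr1 hbd z₀ s hs0 hit lam hl0
        N hN (fun z => g z - (p (ψ z) - lam * p z)) K
        (hgd.sub ((hp.comp hψ hmaps).sub (hp.const_mul lam)))
        (‖Q‖ + (C + ‖lam‖ * C))
        (fun z hz => by
          refine (norm_sub_le _ _).trans (add_le_add (hgb z hz) ?_)
          refine (norm_sub_le _ _).trans (add_le_add (hC _ (hmaps hz)) ?_)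
          rw [norm_mul]
          exact mul_le_mul_of_nonneg_left (hC z hz) (norm_nonneg _))
        hK hpK
      obtain ⟨F, hF⟩ := SpecComp.mkH (fun z => -(f z + p z)) (hf.add hp).neg
        ⟨C' + C, fun z hz => by
          rw [norm_neg]
          exact (norm_add_le _ _).trans (add_le_add (hC' z hz) (hC z hz))⟩
      refine ⟨F, SpecComp.extH fun z => ?_⟩
      rw [happ, hF, hF, hgQ]
      have h1 := hfe z z.2
      linear_combination h1
  ext lam
  simp only [Set.mem_union, Set.mem_ofPred_eq, Set.mem_insert_iff, Set.mem_singleton_iff]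
  constructor
  · intro hmem
    by_contra hcon
    push Not at hcon
    obtain ⟨h1, h2, h3⟩ := hcon
    refine hres lam h2 (fun n hn => ?_) hmem
    rcases Nat.eq_zero_or_pos n with rfl | hpos
    · exact h3 (by rw [← hn, pow_zero])
    · exact h1 n hpos hn.symm
  · rintro (⟨n, -, rfl⟩ | rfl | rfl)
    · by_cases hz : (deriv ψ z₀) ^ n = 0
      · rw [hz]; exact h0
      · exact hpow n hz
    · exact h0
    · have := hpow 0 (by simp)
      rwa [pow_zero] at this
end

section
/- Define τ : D → ℂ by τ(z) = (1/2) z e^{(z+1)/(z−1)}. Then for every fixed z ∈ D, the limit as x → 1 from the left along real x ∈ (0,1) of τ((z + x)/(1 + x z)) is 0; that is, lim_{x → 1⁻} τ((z+x)/(1+xz)) = 0. -/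
/-- For `τ(z) = (1/2) z e^{(z+1)/(z-1)}` and fixed `z` in the open unit disc, the limit
of `τ((z+x)/(1+xz))` as real `x ∈ (0,1)` tends to `1` from the left is `0`. -/
theorem tau_limit_along_mobius
    (z : ℂ) (hz : z ∈ Metric.ball (0 : ℂ) 1) :
    Filter.Tendsto
      (fun x : ℝ =>
        (1 / 2 : ℂ) * ((z + (x : ℂ)) / (1 + (x : ℂ) * z)) *
          Complex.exp
            (((z + (x : ℂ)) / (1 + (x : ℂ) * z) + 1) /
              ((z + (x : ℂ)) / (1 + (x : ℂ) * z) - 1)))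
      (nhdsWithin 1 (Set.Ioo 0 1)) (nhds 0) := by
  have hz1 : ‖z‖ < 1 := by simpa using hz
  have hne : ∀ x : ℝ, 0 ≤ x → x ≤ 1 → (1 + (x : ℂ) * z) ≠ 0 := by
    intro x h0 h1 h
    have h2 : (x : ℂ) * z = -1 := by linear_combination h
    have h3 : x * ‖z‖ = 1 := by
      have := congrArg norm h2
      simpa [abs_of_nonneg h0] using this
    nlinarith [norm_nonneg z]
  have hzm : z - 1 ≠ 0 := by
    intro h
    have : z = 1 := by linear_combination h
    rw [this] at hz1
    simp at hz1
  have hc : ((z + 1) / (z - 1)).re < 0 := by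
    have hs : z.re * z.re + z.im * z.im < 1 := by
      rw [← Complex.normSq_apply, Complex.normSq_eq_norm_sq]
      nlinarith [norm_nonneg z]
    have hp : 0 < Complex.normSq (z - 1) := Complex.normSq_pos.mpr hzm
    rw [Complex.div_re, ← add_div]
    apply div_neg_of_neg_of_pos _ hp
    simp
    nlinarith
  have hA : Filter.Tendsto (fun x : ℝ => (1 / 2 : ℂ) * ((z + (x : ℂ)) / (1 + (x : ℂ) * z)))
      (nhdsWithin 1 (Set.Ioo 0 1))
      (nhds ((1 / 2 : ℂ) * ((z + ((1 : ℝ) : ℂ)) / (1 + ((1 : ℝ) : ℂ) * z)))) := by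
    have : ContinuousAt (fun x : ℝ => (1 / 2 : ℂ) * ((z + (x : ℂ)) / (1 + (x : ℂ) * z))) 1 := by
      refine ContinuousAt.mul continuousAt_const (ContinuousAt.div ?_ ?_ (hne 1 zero_le_one le_rfl))
      · fun_prop
      · fun_prop
    exact this.tendsto.mono_left nhdsWithin_le_nhds
  have hinv : Filter.Tendsto (fun x : ℝ => (1 - x)⁻¹) (nhdsWithin 1 (Set.Ioo 0 1))
      Filter.atTop := by
    apply Filter.Tendsto.inv_tendsto_nhdsGT_zero
    apply tendsto_nhdsWithin_of_tendsto_nhds_of_eventually_within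
    · have : ContinuousAt (fun x : ℝ => 1 - x) 1 := by fun_prop
      have h := this.tendsto.mono_left (nhdsWithin_le_nhds (s := Set.Ioo 0 1))
      simpa using h
    · filter_upwards [self_mem_nhdsWithin] with x hx
      simpa using hx.2
  have hre : Filter.Tendsto (fun x : ℝ => (((z + (x : ℂ)) / (1 + (x : ℂ) * z) + 1) /
              ((z + (x : ℂ)) / (1 + (x : ℂ) * z) - 1)).re)
      (nhdsWithin 1 (Set.Ioo 0 1)) Filter.atBot := by
    refine Filter.tendsto_atBot_mono' _ ?_ (hinv.atTop_mul_const_of_neg hc)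
    filter_upwards [self_mem_nhdsWithin] with x hx
    have h1 := hne x hx.1.le hx.2.le
    have hx1 : (1 - (x : ℂ)) ≠ 0 := by
      have : (1 - x) ≠ 0 := sub_ne_zero.mpr hx.2.ne'
      exact_mod_cast this
    have e1 : (z + (x : ℂ)) / (1 + (x : ℂ) * z) + 1
        = ((1 + x) * (z + 1)) / (1 + (x : ℂ) * z) := by
      rw [div_add_one h1]
      ring
    have e2 : (z + (x : ℂ)) / (1 + (x : ℂ) * z) - 1
        = ((1 - x) * (z - 1)) / (1 + (x : ℂ) * z) := by
      rw [div_sub_one h1]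
      ring
    have e3 : ((z + (x : ℂ)) / (1 + (x : ℂ) * z) + 1) /
              ((z + (x : ℂ)) / (1 + (x : ℂ) * z) - 1)
        = (((1 + x) * (1 - x)⁻¹ : ℝ) : ℂ) * ((z + 1) / (z - 1)) := by
      rw [e1, e2, div_div_div_cancel_right₀ h1]
      push_cast
      field_simp
    rw [e3, Complex.re_ofReal_mul]
    have hi : 0 < (1 - x)⁻¹ := inv_pos.mpr (by linarith [hx.2])
    have : (1 - x)⁻¹ ≤ (1 + x) * (1 - x)⁻¹ := by nlinarith [hx.1]
    exact mul_le_mul_of_nonpos_right this hc.le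
  have hE := Complex.tendsto_exp_comap_re_atBot.comp (Filter.tendsto_comap_iff.mpr hre)
  have := hA.mul hE
  simpa only [mul_zero, Function.comp_def] using this
end
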